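/- Let G ⊆ UT(n,ℝ) be a real unipotent group and let q : ℝ^d → G be a polynomial map, with nonstandard extension q^♯ : (ℝ*)^d → G^♯. Let β = (β₁,…,β_d) ∈ (ℝ*)^d be a tuple of hyperreals such that β₁ > r for every real number r, and for every i with 1 ≤ i ≤ d−1 and every real polynomial p in i variables, β_{i+1} > p(β₁,…,β_i). If H₀ is a real algebraic subgroup of G and g ∈ G is such that the coset gH₀ is near q^♯(β), then q^♯(β) ∈ g·H₀^♯. -/

import Mathlib

open Pointwise Filter

noncomputable section

/-- Square matrices of size `n` over `R`. -/
abbrev Mat (n : ℕ) (R : Type) : Type := Matrix (Fin n) (Fin n) R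

/-- The set `UT(n,ℝ)` of upper triangular matrices with `1`s on the diagonal. -/
def UTset (n : ℕ) : Set (Mat n ℝ) :=
  {A | (∀ i, A i i = 1) ∧ ∀ i j : Fin n, (j : ℕ) < (i : ℕ) → A i j = 0}

/-- The entries of a matrix, as a point of `ℝ^(n²)`. -/
def matEval {n : ℕ} (A : Mat n ℝ) : Fin n × Fin n → ℝ := fun ij => A ij.1 ij.2

/-- A real unipotent group: a subgroup of `UT(n,ℝ)` which is the common zero set in
`UT(n,ℝ)` of a family of real polynomials in the matrix entries. -/
def IsRealUnipotentGroup (n : ℕ) (G : Set (Mat n ℝ)) : Prop :=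
  (∃ S : Set (MvPolynomial (Fin n × Fin n) ℝ),
      G = {A | A ∈ UTset n ∧ ∀ p ∈ S, MvPolynomial.eval (matEval A) p = 0}) ∧
    (1 : Mat n ℝ) ∈ G ∧ (∀ a ∈ G, ∀ b ∈ G, a * b ∈ G) ∧ ∀ a ∈ G, a⁻¹ ∈ G

/-- A real algebraic subgroup of a real unipotent group `G`. -/
def IsRealAlgSubgroup (n : ℕ) (G H : Set (Mat n ℝ)) : Prop :=
  H ⊆ G ∧ IsRealUnipotentGroup n H

/-- `N` is a normal subgroup-set of `G`. -/
def IsNormalIn (n : ℕ) (G N : Set (Mat n ℝ)) : Prop :=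
  ∀ g ∈ G, ∀ x ∈ N, g * x * g⁻¹ ∈ N

/-- `Γ` is a lattice in `G`: a discrete subgroup which is cocompact, i.e. there is a
compact `K ⊆ G` with `K·Γ = G` (equivalently, `G/Γ` is compact). -/
def IsLatticeIn (n : ℕ) (G Γ : Set (Mat n ℝ)) : Prop :=
  Γ ⊆ G ∧ (1 : Mat n ℝ) ∈ Γ ∧ (∀ a ∈ Γ, ∀ b ∈ Γ, a * b ∈ Γ) ∧ (∀ a ∈ Γ, a⁻¹ ∈ Γ) ∧
    DiscreteTopology ↥Γ ∧
    ∃ K : Set (Mat n ℝ), K ⊆ G ∧ IsCompact K ∧ ∀ g ∈ G, ∃ k ∈ K, ∃ γ ∈ Γ, g = k * γ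

/-- `H` is `Γ`-rational: `Γ ∩ H` is a lattice in `H`. -/
def IsRationalFor (n : ℕ) (Γ H : Set (Mat n ℝ)) : Prop :=
  IsLatticeIn n H (Γ ∩ H)

/-- The hyperreal matrix represented by a sequence of real matrices. -/
def matOfSeq (n : ℕ) (u : ℕ → Mat n ℝ) : Mat n Hyperreal :=
  Matrix.of fun i j => Hyperreal.ofSeq fun k => u k i j

/-- The nonstandard extension `S^♯` of a set `S` of real matrices: hyperreal matrices
represented by sequences landing in `S` on a set of indices in the ultrafilter. -/
def matSharp (n : ℕ) (S : Set (Mat n ℝ)) : Set (Mat n Hyperreal) :=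
  {A | ∃ u : ℕ → Mat n ℝ, (∀ᶠ k in hyperfilter ℕ, u k ∈ S) ∧ A = matOfSeq n u}

/-- The canonical embedding of real matrices into hyperreal matrices. -/
def matCast {n : ℕ} (A : Mat n ℝ) : Mat n Hyperreal :=
  Matrix.of fun i j => (A i j : Hyperreal)

/-- `μ(G)`: elements of `G^♯` all of whose entries are infinitesimally close to the
corresponding entries of the identity matrix. -/
def muSet (n : ℕ) (G : Set (Mat n ℝ)) : Set (Mat n Hyperreal) :=
  {A | A ∈ matSharp n G ∧ ∀ i j, Hyperreal.Infinitesimal (A i j - (1 : Mat n Hyperreal) i j)}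

/-- The coset `gH` is near `α`, i.e. `α ∈ μ(G)·g·H^♯`. -/
def NearCoset (n : ℕ) (G : Set (Mat n ℝ)) (g : Mat n ℝ) (H : Set (Mat n ℝ))
    (α : Mat n Hyperreal) : Prop :=
  α ∈ muSet n G * ({matCast g} * matSharp n H)

/-- The set of standard parts of the finite elements of a set of hyperreal matrices. -/
def matStSet (n : ℕ) (A : Set (Mat n Hyperreal)) : Set (Mat n ℝ) :=
  {B | ∃ a ∈ A, ∀ i j, Hyperreal.IsSt (a i j) (B i j)}

/-- A polynomial map `ℝ^d → Mat n ℝ`. -/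
def IsPolyMapVec (d n : ℕ) (F : (Fin d → ℝ) → Mat n ℝ) : Prop :=
  ∃ P : Fin n → Fin n → MvPolynomial (Fin d) ℝ,
    ∀ x i j, F x i j = MvPolynomial.eval x (P i j)

/-- The inclusion `ℝ →+* ℝ*` as a ring homomorphism. -/
def realHyperRingHom : ℝ →+* Hyperreal where
  toFun r := (r : Hyperreal)
  map_one' := Hyperreal.coe_one
  map_mul' := Hyperreal.coe_mul
  map_zero' := Hyperreal.coe_zero
  map_add' := Hyperreal.coe_add

/-- A semialgebraic subset of matrix space: a finite union of sets defined by finitely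
many polynomial equations and finitely many strict polynomial inequalities. -/
def IsSemialgebraic (n : ℕ) (S : Set (Mat n ℝ)) : Prop :=
  ∃ (k : ℕ) (P Q : Fin k → Finset (MvPolynomial (Fin n × Fin n) ℝ)),
    S = ⋃ t : Fin k, {A | (∀ p ∈ P t, MvPolynomial.eval (matEval A) p = 0) ∧
      ∀ q ∈ Q t, 0 < MvPolynomial.eval (matEval A) q}



theorem aux_ineq (m : ℕ) (a : ℕ → ℝ) (β δ r : ℝ) (hδ : 0 < δ) (hm : δ ≤ |a (m+1)|) (hβ : 1 ≤ β)
    (h : |r| + 1 + ∑ j ∈ Finset.range (m+1), (1 + a j ^ 2) ≤ δ * β) :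
    r < |∑ j ∈ Finset.range (m+2), a j * β ^ j| := by
  set T := ∑ j ∈ Finset.range (m+1), (1 + a j ^ 2) with hT
  rw [Finset.sum_range_succ]
  have hp : 1 ≤ β ^ m := one_le_pow₀ hβ
  have h1 : |∑ j ∈ Finset.range (m+1), a j * β ^ j| ≤ T * β ^ m := by
    refine (Finset.abs_sum_le_sum_abs _ _).trans ?_
    rw [hT, Finset.sum_mul]
    refine Finset.sum_le_sum fun j hj => ?_
    rw [abs_mul, abs_of_nonneg (by positivity : (0:ℝ) ≤ β ^ j)]
    have : β ^ j ≤ β ^ m := pow_le_pow_right₀ hβ (by simp at hj; omega)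
    have h3 : |a j| ≤ 1 + a j ^ 2 := by
      rw [← sq_abs]; nlinarith [sq_nonneg (|a j| - 1), abs_nonneg (a j)]
    gcongr
  have h2 : (|r| + 1 + T) * β ^ m ≤ |a (m+1) * β ^ (m+1)| := by
    rw [abs_mul, abs_of_nonneg (by positivity : (0:ℝ) ≤ β ^ (m+1)), pow_succ', ← mul_assoc]
    have : δ * β ≤ |a (m+1)| * β := by gcongr
    gcongr
    linarith
  have h3 := abs_sub_abs_le_abs_sub (a (m+1) * β ^ (m+1)) (-∑ j ∈ Finset.range (m+1), a j * β ^ j)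
  rw [abs_neg, sub_neg_eq_add, add_comm (a (m+1) * β ^ (m+1))] at h3
  have : |r| + 1 ≤ (|r| + 1) * β ^ m := le_mul_of_one_le_right (by positivity) hp
  have := le_abs_self r
  linarith

theorem growth {ι : Type} (l : Filter ι) : ∀ (d : ℕ) (b : ι → Fin d → ℝ)
    (_ : ∀ i, ∀ q : MvPolynomial (Fin d) ℝ, (∀ j ∈ q.vars, i < j) →
      ∀ᶠ k in l, MvPolynomial.eval (b k) q < b k i)
    (p : MvPolynomial (Fin d) ℝ) (_ : ∀ c, p ≠ MvPolynomial.C c) (r : ℝ),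
    ∀ᶠ k in l, r < |MvPolynomial.eval (b k) p| := by
  intro d
  induction d with
  | zero =>
    intro b _ p hp
    exact absurd (MvPolynomial.eq_C_of_isEmpty p) (hp _)
  | succ d ih =>
    intro b hb p hp r
    set b' : ι → Fin d → ℝ := fun k i => b k i.succ with hb'
    have hcons : ∀ k, b k = Fin.cons (b k 0) (b' k) := fun k => (Fin.cons_self_tail (b k)).symm
    have hren : ∀ k (q : MvPolynomial (Fin d) ℝ),
        MvPolynomial.eval (b k) (MvPolynomial.rename Fin.succ q) = MvPolynomial.eval (b' k) q := by
      intro k q; rw [MvPolynomial.eval_rename]; rfl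
    have hvars : ∀ (q : MvPolynomial (Fin d) ℝ) j,
        j ∈ (MvPolynomial.rename Fin.succ q).vars → ∃ j' ∈ q.vars, Fin.succ j' = j := by
      intro q j hj
      have := MvPolynomial.vars_rename Fin.succ q hj
      simpa using this
    have hbig : ∀ q : MvPolynomial (Fin d) ℝ, ∀ᶠ k in l, MvPolynomial.eval (b' k) q < b k 0 := by
      intro q
      have := hb 0 (MvPolynomial.rename Fin.succ q) (by
        intro j hj; obtain ⟨j', _, rfl⟩ := hvars q j hj; exact Fin.succ_pos j')
      simpa only [hren] using this
    have ih' := ih b' (by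
      intro i q hq
      have := hb i.succ (MvPolynomial.rename Fin.succ q) (by
        intro j hj; obtain ⟨j', h, rfl⟩ := hvars q j hj; exact Fin.succ_lt_succ_iff.2 (hq _ h))
      simpa only [hren] using this)
    set P := MvPolynomial.finSuccEquiv ℝ d p with hP
    have hev : ∀ k, MvPolynomial.eval (b k) p =
        ∑ j ∈ Finset.range (P.natDegree + 1), MvPolynomial.eval (b' k) (P.coeff j) * (b k 0) ^ j := by
      intro k
      conv_lhs => rw [hcons k, MvPolynomial.eval_eq_eval_mv_eval']
      rw [Polynomial.eval_map, Polynomial.eval₂_eq_sum_range]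
    rcases hm : P.natDegree with _ | m
    · simp only [hev, hm]
      simp only [zero_add, Finset.sum_range_one, pow_zero, mul_one]
      apply ih'
      intro c hc
      apply hp c
      apply (MvPolynomial.finSuccEquiv ℝ d).injective
      rw [← hP, Polynomial.eq_C_of_natDegree_eq_zero hm, hc]
      simp [MvPolynomial.finSuccEquiv_apply]
    · have hlead : P.coeff (m+1) ≠ 0 := by
        rw [← hm]; intro h
        have : P = 0 := Polynomial.leadingCoeff_eq_zero.1 h
        simp [this] at hm
      obtain ⟨δ, hδ, hδ'⟩ : ∃ δ > 0, ∀ᶠ k in l, δ < |MvPolynomial.eval (b' k) (P.coeff (m+1))| := by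
        by_cases hc : ∃ c, P.coeff (m+1) = MvPolynomial.C c
        · obtain ⟨c, hc⟩ := hc
          have : c ≠ 0 := by rintro rfl; exact hlead (by simpa using hc)
          have := abs_pos.2 this
          refine ⟨|c|/2, by positivity, Eventually.of_forall fun k => ?_⟩
          rw [hc, MvPolynomial.eval_C]; linarith
        · push Not at hc
          exact ⟨1, one_pos, ih' _ hc 1⟩
      have hQ := hbig (MvPolynomial.C (1/δ) * (MvPolynomial.C (|r|+1) +
        ∑ j ∈ Finset.range (m+1), (1 + P.coeff j ^ 2)))
      have h1 := hbig 1
      filter_upwards [hδ', hQ, h1] with k hk hQk h1k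
      rw [hev, hm]
      refine aux_ineq m (fun j => MvPolynomial.eval (b' k) (P.coeff j)) _ δ r hδ hk.le
        (by simpa using h1k.le) ?_
      simp only [map_mul, map_add, MvPolynomial.eval_C, map_sum, map_one, map_pow] at hQk
      rw [one_div, inv_mul_lt_iff₀ hδ] at hQk
      exact hQk.le

theorem growth_lim {ι : Type} (l : Filter ι) [l.NeBot] (d : ℕ) (b : ι → Fin d → ℝ)
    (hb : ∀ i, ∀ q : MvPolynomial (Fin d) ℝ, (∀ j ∈ q.vars, j < i) →
      ∀ᶠ k in l, MvPolynomial.eval (b k) q < b k i)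
    (p : MvPolynomial (Fin d) ℝ) (c : ℝ)
    (hc : Tendsto (fun k => MvPolynomial.eval (b k) p) l (nhds c)) : p = MvPolynomial.C c := by
  by_contra hne
  have hren : ∀ k (q : MvPolynomial (Fin d) ℝ),
      MvPolynomial.eval (b k) (MvPolynomial.rename Fin.rev q)
        = MvPolynomial.eval (fun i => b k i.rev) q := by
    intro k q; rw [MvPolynomial.eval_rename]; rfl
  have key := growth l d (fun k i => b k i.rev) (by
    intro i q hq
    have := hb i.rev (MvPolynomial.rename Fin.rev q) (by
      intro j hj
      have := MvPolynomial.vars_rename Fin.rev q hj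
      simp only [Finset.mem_image] at this
      obtain ⟨j', h, rfl⟩ := this
      exact Fin.rev_lt_rev.2 (hq _ h))
    simpa only [hren] using this) (MvPolynomial.rename Fin.rev p)
  have hev : ∀ k, MvPolynomial.eval (fun i => b k i.rev) (MvPolynomial.rename Fin.rev p) =
      MvPolynomial.eval (b k) p := by
    intro k; rw [MvPolynomial.eval_rename]; congr 1
    congr 1; ext i; simp
  simp only [hev] at key
  by_cases hcon : ∃ c', p = MvPolynomial.C c'
  · obtain ⟨c', rfl⟩ := hcon
    simp only [MvPolynomial.eval_C] at hc
    exact hne (by rw [tendsto_nhds_unique hc tendsto_const_nhds])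
  · have := key (by
      intro c' h
      apply hcon
      refine ⟨c', ?_⟩
      have h2 := congrArg (MvPolynomial.rename Fin.rev) h
      rw [MvPolynomial.rename_rename] at h2
      have : (Fin.rev ∘ Fin.rev : Fin d → Fin d) = id := by ext; simp
      rw [this] at h2
      simpa using h2) (|c| + 1)
    have h2 : ∀ᶠ k in l, |MvPolynomial.eval (b k) p| < |c| + 1 :=
      hc.abs.eventually_lt_const (by linarith)
    obtain ⟨k, h, h'⟩ := (this.and h2).exists
    linarith

theorem det_mem_sub {X κ : Type} [Fintype κ] [DecidableEq κ] (A : Subalgebra ℝ (X → ℝ))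
    (M : X → Matrix κ κ ℝ) (hM : ∀ i j, (fun x => M x i j) ∈ A) : (fun x => (M x).det) ∈ A := by
  have : (fun x => (M x).det) = ∑ σ : Equiv.Perm κ, ((Equiv.Perm.sign σ : ℤ) : ℝ) •
      ∏ i, (fun x => M x (σ i) i) := by
    ext x
    simp [Matrix.det_apply, Finset.sum_apply, Finset.prod_apply, Units.smul_def]
  rw [this]
  exact A.sum_mem fun σ _ => A.smul_mem (A.prod_mem fun i _ => hM _ _) _

theorem eval_mem_sub {X σ : Type} (A : Subalgebra ℝ (X → ℝ))
    (z : X → σ → ℝ) (hz : ∀ i, (fun x => z x i) ∈ A) (f : MvPolynomial σ ℝ) :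
    (fun x => MvPolynomial.eval (z x) f) ∈ A := by
  induction f using MvPolynomial.induction_on with
  | C a => simp only [MvPolynomial.eval_C]; exact A.algebraMap_mem a
  | add p q hp hq => simp only [map_add]; exact A.add_mem hp hq
  | mul_X p i hp => simp only [map_mul, MvPolynomial.eval_X]; exact A.mul_mem hp (hz i)

theorem points {X κ : Type} [Fintype κ] [DecidableEq κ] (f : κ → X → ℝ)
    (hf : ∀ a : κ → ℝ, (∀ x, ∑ i, a i * f i x = 0) → a = 0) :
    ∃ y : κ → X, (Matrix.of fun i l => f i (y l)).det ≠ 0 := by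
  classical
  set w : X → κ → ℝ := fun x i => f i x with hw
  have hs : ⊤ ≤ Submodule.span ℝ (Set.range w) := by
    by_contra hlt
    obtain ⟨φ, h0, hφ⟩ := Submodule.exists_le_ker_of_lt_top _ (lt_top_iff_ne_top.2 (fun h => hlt h.ge))
    apply h0
    have hrep : ∀ v, φ v = ∑ i, φ (Pi.single i 1) * v i := by
      intro v
      conv_lhs => rw [pi_eq_sum_univ' v]
      simp [mul_comm]
    have := hf (fun i => φ (Pi.single i 1)) (by
      intro x
      rw [← hrep (w x)]
      exact hφ (Submodule.subset_span ⟨x, rfl⟩))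
    ext i
    simpa using congrFun this i
  let B := Module.Basis.ofSpan hs
  have : Finite _ := Module.Finite.finite_basis B
  let e := B.indexEquiv (Pi.basisFun ℝ κ)
  let B' := B.reindex e
  have hB' : ∀ l, ∃ x, w x = B' l := by
    intro l
    rw [Module.Basis.reindex_apply]
    exact Module.Basis.ofSpan_subset hs ⟨_, rfl⟩
  choose y hy using hB'
  refine ⟨y, ?_⟩
  have hli := B'.linearIndependent
  rw [← isUnit_iff_ne_zero, ← Matrix.isUnit_iff_isUnit_det,
    ← Matrix.linearIndependent_cols_iff_isUnit]
  have hcol : (Matrix.of fun i l => f i (y l)).col = B' := by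
    ext l i
    rw [← hy l]; rfl
  rw [hcol]
  exact hli

/-- polynomial functions -/
def polyFun (d : ℕ) : Subalgebra ℝ ((Fin d → ℝ) → ℝ) :=
  (AlgHom.range (AlgHom.pi fun x : Fin d → ℝ => MvPolynomial.aeval x))

theorem mem_polyFun {d : ℕ} (u : (Fin d → ℝ) → ℝ) :
    u ∈ polyFun d ↔ ∃ p : MvPolynomial (Fin d) ℝ, ∀ x, u x = MvPolynomial.eval x p := by
  constructor
  · rintro ⟨p, hp⟩
    exact ⟨p, fun x => by rw [← hp]; simp [MvPolynomial.aeval_eq_eval]⟩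
  · rintro ⟨p, hp⟩
    exact ⟨p, by ext x; rw [hp]; simp [MvPolynomial.aeval_eq_eval]⟩

def polyNat : Subalgebra ℝ (ℕ → ℝ) :=
  (AlgHom.range (AlgHom.pi fun x : ℕ => Polynomial.aeval (x : ℝ)))

theorem mem_polyNat (u : ℕ → ℝ) :
    u ∈ polyNat ↔ ∃ p : Polynomial ℝ, ∀ x : ℕ, u x = Polynomial.eval (x : ℝ) p := by
  constructor
  · rintro ⟨p, hp⟩
    exact ⟨p, fun x => by rw [← hp]; simp [Polynomial.coe_aeval_eq_eval]⟩
  · rintro ⟨p, hp⟩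
    exact ⟨p, by ext x; rw [hp]; simp [Polynomial.coe_aeval_eq_eval]⟩

theorem geom_poly (c : ℝ) (h : (fun m : ℕ => c ^ m) ∈ polyNat) : c = 0 ∨ c = 1 := by
  obtain ⟨p, hp⟩ := (mem_polyNat _).1 h
  have hp0 : p ≠ 0 := by
    rintro rfl
    simpa using hp 0
  have : p.comp (Polynomial.X + Polynomial.C 1) = Polynomial.C c * p := by
    apply Polynomial.eq_of_infinite_eval_eq
    refine Set.Infinite.mono ?_ (Set.infinite_range_of_injective (Nat.cast_injective (R := ℝ)))
    rintro _ ⟨m, rfl⟩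
    have := hp (m+1)
    push_cast at this
    simp [← this, ← hp m, pow_succ']
  have h2 := congrArg Polynomial.leadingCoeff this
  rw [Polynomial.leadingCoeff_comp (by rw [Polynomial.natDegree_X_add_C]; simp), Polynomial.leadingCoeff_mul] at h2
  simp only [Polynomial.leadingCoeff_X_add_C, one_pow, mul_one, Polynomial.leadingCoeff_C] at h2
  right
  have : p.leadingCoeff ≠ 0 := by simpa using hp0
  exact (mul_right_cancel₀ this (by rw [one_mul]; exact h2)).symm

theorem choose_poly (k : ℕ) : (fun m : ℕ => (m.choose k : ℝ)) ∈ polyNat := by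
  rw [mem_polyNat]
  refine ⟨Polynomial.C ((k.factorial : ℝ)⁻¹) * descPochhammer ℝ k, fun m => ?_⟩
  rw [Polynomial.eval_mul, Polynomial.eval_C, descPochhammer_eval_eq_descFactorial,
    Nat.descFactorial_eq_factorial_mul_choose]
  have : (k.factorial : ℝ) ≠ 0 := by positivity
  push_cast; field_simp

theorem pow_poly {n : ℕ} (h : Matrix (Fin n) (Fin n) ℝ) (h1 : ∀ i, h i i = 1)
    (h0 : ∀ i j : Fin n, (j : ℕ) < (i : ℕ) → h i j = 0) (i j : Fin n) :
    (fun m : ℕ => (h ^ m) i j) ∈ polyNat := by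
  set N := h - 1 with hN
  have hnil : N ^ n = 0 := by
    have htri : N.BlockTriangular id := by
      intro i j hij
      have hij' : j < i := hij
      simp [hN, Matrix.one_apply, hij'.ne', h0 i j hij']
    have hch := Matrix.charpoly_of_isUpperTriangular N htri
    have hX : N.charpoly = Polynomial.X ^ n := by
      rw [hch]; simp [hN, h1]
    have := Matrix.aeval_self_charpoly N
    rw [hX] at this
    simpa using this
  have hpow : ∀ m, h ^ m = ∑ k ∈ Finset.range n, (m.choose k : ℝ) • N ^ k := by
    intro m
    have : h = N + 1 := by simp [hN]
    conv_lhs => rw [this, (Commute.one_right N).add_pow]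
    simp only [one_pow, mul_one]
    have hsum : ∀ M ≥ m + 1, ∑ k ∈ Finset.range (m+1), N ^ k * (m.choose k : Matrix (Fin n) (Fin n) ℝ) =
      ∑ k ∈ Finset.range M, (m.choose k : ℝ) • N ^ k := by
      intro M hM
      rw [← Finset.sum_subset (Finset.range_subset_range.2 hM)]
      · refine Finset.sum_congr rfl fun k _ => ?_
        rw [(Nat.cast_commute _ _).symm.eq, ← nsmul_eq_mul, ← Nat.cast_smul_eq_nsmul ℝ]
      · intro k _ hk
        rw [Nat.choose_eq_zero_of_lt (by simpa using hk)]; simp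
    rw [hsum (m + 1 + n) (by omega)]
    symm
    apply Finset.sum_subset (Finset.range_subset_range.2 (by omega))
    intro k _ hk
    have : n ≤ k := by simpa using hk
    rw [← Nat.sub_add_cancel this, pow_add, hnil]; simp
  have : (fun m : ℕ => (h ^ m) i j) = ∑ k ∈ Finset.range n, ((N ^ k) i j) • (fun m : ℕ => (m.choose k : ℝ)) := by
    ext m
    rw [hpow, Matrix.sum_apply, Finset.sum_apply]
    refine Finset.sum_congr rfl fun k _ => ?_
    simp [mul_comm]
  rw [this]
  exact polyNat.sum_mem fun k _ => polyNat.smul_mem (choose_poly k) _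

theorem totalDegree_aeval_lin {σ : Type} (L : σ → MvPolynomial σ ℝ)
    (hL : ∀ i, (L i).totalDegree ≤ 1) (f : MvPolynomial σ ℝ) :
    (MvPolynomial.aeval L f).totalDegree ≤ f.totalDegree := by
  rw [MvPolynomial.aeval_def, MvPolynomial.eval₂_eq]
  apply MvPolynomial.totalDegree_finsetSum_le
  intro d hd
  refine (MvPolynomial.totalDegree_mul _ _).trans ?_
  rw [MvPolynomial.algebraMap_eq, MvPolynomial.totalDegree_C, zero_add]
  refine (MvPolynomial.totalDegree_finsetProd _ _).trans ?_
  refine le_trans (Finset.sum_le_sum fun i _ => ?_) (MvPolynomial.le_totalDegree hd)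
  refine (MvPolynomial.totalDegree_pow _ _).trans ?_
  calc d i * (L i).totalDegree ≤ d i * 1 := Nat.mul_le_mul_left _ (hL i)
    _ = d i := mul_one _

/-- linear forms giving the entries of `y * h` -/
def rForm {n : ℕ} (h : Mat n ℝ) (ij : Fin n × Fin n) : MvPolynomial (Fin n × Fin n) ℝ :=
  ∑ k, MvPolynomial.X (ij.1, k) * MvPolynomial.C (h k ij.2)

theorem rForm_deg {n : ℕ} (h : Mat n ℝ) (ij : Fin n × Fin n) : (rForm h ij).totalDegree ≤ 1 := by
  apply MvPolynomial.totalDegree_finsetSum_le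
  intro k _
  refine (MvPolynomial.totalDegree_mul _ _).trans ?_
  simp

theorem rForm_eval {n : ℕ} (h y : Mat n ℝ) (f : MvPolynomial (Fin n × Fin n) ℝ) :
    MvPolynomial.eval (matEval y) (MvPolynomial.aeval (rForm h) f) =
      MvPolynomial.eval (matEval (y * h)) f := by
  rw [MvPolynomial.aeval_def, MvPolynomial.eval₂_eq', map_sum, MvPolynomial.eval_eq' (matEval (y * h)) f]
  refine Finset.sum_congr rfl fun d _ => ?_
  simp only [map_mul, map_prod, map_pow, MvPolynomial.algebraMap_eq, MvPolynomial.eval_C]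
  congr 1
  refine Finset.prod_congr rfl fun i _ => ?_
  congr 1
  simp [rForm, matEval, Matrix.mul_apply]

/-- Polynomials of degree at most `D` vanishing on `H`. -/
def vanW {n : ℕ} (H : Set (Mat n ℝ)) (D : ℕ) : Submodule ℝ (MvPolynomial (Fin n × Fin n) ℝ) where
  carrier := {f | f ∈ MvPolynomial.restrictTotalDegree (Fin n × Fin n) ℝ D ∧
    ∀ y ∈ H, MvPolynomial.eval (matEval y) f = 0}
  zero_mem' := ⟨Submodule.zero_mem _, fun y _ => by simp⟩
  add_mem' := fun ha hb => ⟨Submodule.add_mem _ ha.1 hb.1, fun y hy => by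
    rw [map_add, ha.2 y hy, hb.2 y hy, add_zero]⟩
  smul_mem' := fun c f hf => ⟨Submodule.smul_mem _ c hf.1, fun y hy => by
    rw [MvPolynomial.smul_eval, hf.2 y hy, mul_zero]⟩

instance {n : ℕ} (H : Set (Mat n ℝ)) (D : ℕ) : Module.Finite ℝ (vanW H D) := by
  have hle : vanW H D ≤ MvPolynomial.restrictTotalDegree (Fin n × Fin n) ℝ D := fun f hf => hf.1
  exact Submodule.finiteDimensional_of_le hle

theorem eval_cont {n : ℕ} (f : MvPolynomial (Fin n × Fin n) ℝ) (y : Mat n ℝ) :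
    Continuous fun x : Mat n ℝ => MvPolynomial.eval (matEval (y * x)) f := by
  have : Continuous fun x : Mat n ℝ => matEval (y * x) := by
    apply continuous_pi
    intro ij
    exact (Continuous.matrix_mul continuous_const continuous_id).matrix_elem ij.1 ij.2
  exact (MvPolynomial.continuous_eval f).comp this

theorem main_real {n d : ℕ} {ι : Type} (l : Filter ι) [l.NeBot] (b : ι → Fin d → ℝ)
    (hb : ∀ i, ∀ q : MvPolynomial (Fin d) ℝ, (∀ j ∈ q.vars, j < i) →
      ∀ᶠ k in l, MvPolynomial.eval (b k) q < b k i)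
    (H : Set (Mat n ℝ)) (hUT : H ⊆ UTset n) (hone : (1 : Mat n ℝ) ∈ H)
    (hmul : ∀ a ∈ H, ∀ b ∈ H, a * b ∈ H)
    (Q : (Fin d → ℝ) → Mat n ℝ) (hQ : ∀ i j, (fun x => Q x i j) ∈ polyFun d)
    (e h : ι → Mat n ℝ) (he : Tendsto e l (nhds 1)) (hh : ∀ᶠ k in l, h k ∈ H)
    (heq : ∀ᶠ k in l, Q (b k) = e k * h k)
    (f₀ : MvPolynomial (Fin n × Fin n) ℝ) (hf₀ : ∀ y ∈ H, MvPolynomial.eval (matEval y) f₀ = 0)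
    (x : Fin d → ℝ) : MvPolynomial.eval (matEval (Q x)) f₀ = 0 := by
  have hlim : ∀ u ∈ polyFun d, ∀ c, Tendsto (fun k => u (b k)) l (nhds c) → ∀ x, u x = c := by
    intro u hu c hc x
    obtain ⟨p, hp⟩ := (mem_polyFun u).1 hu
    simp only [hp] at hc
    rw [hp, growth_lim l d b hb p c hc, MvPolynomial.eval_C]
  set D := f₀.totalDegree with hD
  let B := Module.finBasis ℝ (vanW H D)
  set K := Module.finrank ℝ (vanW H D) with hK
  let f : Fin K → MvPolynomial (Fin n × Fin n) ℝ := fun i => (B i : MvPolynomial (Fin n × Fin n) ℝ)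
  have hspan : ∀ g ∈ vanW H D, ∃ a : Fin K → ℝ, g = ∑ i, a i • f i := by
    intro g hg
    refine ⟨fun i => B.repr ⟨g, hg⟩ i, ?_⟩
    have := congrArg Subtype.val (B.sum_repr ⟨g, hg⟩)
    rw [Submodule.coe_sum] at this
    exact this.symm
  obtain ⟨y, hy⟩ := points (X := Mat n ℝ) (fun i x => MvPolynomial.eval (matEval x) (f i)) (by
    intro a ha
    have hz : ∑ i, a i • f i = 0 := by
      apply MvPolynomial.funext
      intro z
      have := ha (Matrix.of fun i j => z (i, j))
      have hz : matEval (Matrix.of fun i j => z (i, j)) = z := by ext ⟨i, j⟩; rfl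
      simpa [hz] using this
    have hz' : ∑ i, a i • B i = 0 := by
      apply Subtype.ext
      simpa [f] using hz
    ext i
    exact Fintype.linearIndependent_iff.1 B.linearIndependent a hz' i)
  let F : Mat n ℝ → Matrix (Fin K) (Fin K) ℝ :=
    fun x => Matrix.of fun i l => MvPolynomial.eval (matEval (y l * x)) (f i)
  let v : Mat n ℝ → Fin K → ℝ := fun x i => MvPolynomial.eval (matEval x) (f i)
  have hF1 : (F 1).det ≠ 0 := by simpa [F] using hy
  have hv1 : v 1 = 0 := by
    ext i
    exact (B i).2.2 1 hone
  have hFc : Continuous F := continuous_matrix fun i l => eval_cont (f i) (y l)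
  have hvc : Continuous v := continuous_pi fun i => by
    simpa using eval_cont (f i) 1
  -- the cocycle
  have hc : ∀ h ∈ H, ∃ c : Matrix (Fin K) (Fin K) ℝ, c.det = 1 ∧
      (∀ x, F (x * h) = c * F x) ∧ ∀ x, v (x * h) = c.mulVec (v x) := by
    intro h hh
    have hmem : ∀ i, MvPolynomial.aeval (rForm h) (f i) ∈ vanW H D := by
      intro i
      constructor
      · rw [MvPolynomial.mem_restrictTotalDegree]
        exact (totalDegree_aeval_lin _ (rForm_deg h) _).trans
          ((MvPolynomial.mem_restrictTotalDegree _ _ _).1 (B i).2.1)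
      · intro y hy
        rw [rForm_eval]
        exact (B i).2.2 _ (hmul _ hy _ hh)
    choose c hc using fun i => hspan _ (hmem i)
    have hv : ∀ x, v (x * h) = (Matrix.of c).mulVec (v x) := by
      intro x
      ext i
      have := congrArg (MvPolynomial.eval (matEval x)) (hc i)
      rw [rForm_eval] at this
      simpa [v, Matrix.mulVec, dotProduct] using this
    have hF : ∀ x, F (x * h) = Matrix.of c * F x := by
      intro x
      ext i l
      have := congrFun (hv (y l * x)) i
      rw [mul_assoc] at this
      simpa [F, v, Matrix.mul_apply, Matrix.mulVec, dotProduct] using this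
    refine ⟨Matrix.of c, ?_, hF, hv⟩
    have hpow : ∀ m : ℕ, F (h ^ m) = (Matrix.of c) ^ m * F 1 := by
      intro m
      induction m with
      | zero => simp
      | succ m ih => rw [pow_succ h, hF, ih, pow_succ' (Matrix.of c), mul_assoc]
    have hdet : ∀ m : ℕ, (F 1).det⁻¹ * (F (h ^ m)).det = (Matrix.of c).det ^ m := by
      intro m
      rw [hpow, Matrix.det_mul, Matrix.det_pow]
      field_simp
    have hpn : (fun m : ℕ => (Matrix.of c).det ^ m) ∈ polyNat := by
      simp only [← hdet]
      apply polyNat.smul_mem (x := fun m : ℕ => (F (h ^ m)).det)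
      apply det_mem_sub
      intro i l
      apply eval_mem_sub polyNat (fun m => matEval (y l * h ^ m))
      rintro ⟨s, t⟩
      have : (fun m : ℕ => matEval (y l * h ^ m) (s, t)) =
          ∑ r, (y l s r) • (fun m : ℕ => (h ^ m) r t) := by
        ext m
        simp [matEval, Matrix.mul_apply]
      rw [this]
      exact polyNat.sum_mem fun r _ => polyNat.smul_mem (pow_poly h (hUT hh).1 (hUT hh).2 r t) _
    rcases geom_poly _ hpn with h0 | h1
    · exfalso
      -- `F h⁻¹`-free argument: `h ↦ c` has polynomial powers, so a zero value is impossible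
      obtain ⟨p, hp⟩ := (mem_polyNat _).1 hpn
      rw [h0] at hp
      have hp0 : p = 0 := by
        apply Polynomial.eq_zero_of_infinite_isRoot
        refine Set.Infinite.mono ?_ (Set.infinite_range_of_injective
          (f := fun m : ℕ => ((m + 1 : ℕ) : ℝ)) (fun a b hab => by simpa using hab))
        rintro _ ⟨m, rfl⟩
        have := hp (m+1)
        rw [zero_pow (by omega)] at this
        exact this.symm
      have := hp 0
      simp [hp0] at this
    · exact h1
  -- polynomiality
  have hFp : ∀ i l, (fun x => F (Q x) i l) ∈ polyFun d := by
    intro i l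
    apply eval_mem_sub (polyFun d) (fun x => matEval (y l * Q x))
    rintro ⟨s, t⟩
    have : (fun x => matEval (y l * Q x) (s, t)) = ∑ r, (y l s r) • (fun x => Q x r t) := by
      ext m
      simp [matEval, Matrix.mul_apply]
    rw [this]
    exact (polyFun d).sum_mem fun r _ => (polyFun d).smul_mem (hQ r t) _
  have hvp : ∀ i, (fun x => v (Q x) i) ∈ polyFun d := fun i =>
    eval_mem_sub (polyFun d) (fun x => matEval (Q x)) (fun st => hQ st.1 st.2) (f i)
  have hdetp : (fun x => (F (Q x)).det) ∈ polyFun d := det_mem_sub _ _ hFp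
  have hadjp : ∀ i, (fun x => (F (Q x)).adjugate.mulVec (v (Q x)) i) ∈ polyFun d := by
    intro i
    have : (fun x => (F (Q x)).adjugate.mulVec (v (Q x)) i) =
        ∑ j, (fun x => (F (Q x)).adjugate i j) * (fun x => v (Q x) j) := by
      ext x
      simp [Matrix.mulVec, dotProduct]
    rw [this]
    refine (polyFun d).sum_mem fun j _ => (polyFun d).mul_mem ?_ (hvp j)
    simp only [Matrix.adjugate_apply]
    apply det_mem_sub
    intro s t
    simp only [Matrix.updateRow_apply]
    split_ifs
    · exact (polyFun d).algebraMap_mem _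
    · exact hFp s t
  have hdet : ∀ x, (F (Q x)).det = (F 1).det := by
    apply hlim _ hdetp
    have h1 : Tendsto (fun k => (F (e k)).det) l (nhds (F 1).det) :=
      ((hFc.matrix_det).tendsto 1).comp he
    refine h1.congr' ?_
    filter_upwards [hh, heq] with k hk hek
    obtain ⟨c, hc1, hcF, _⟩ := hc _ hk
    rw [hek, hcF, Matrix.det_mul, hc1, one_mul]
  have hadj : ∀ i, ∀ x, (F (Q x)).adjugate.mulVec (v (Q x)) i = 0 := by
    intro i
    apply hlim _ (hadjp i)
    have hcont : Continuous fun x => (F x).adjugate.mulVec (v x) i :=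
      (continuous_apply i).comp (Continuous.matrix_mulVec hFc.matrix_adjugate hvc)
    have h1 : Tendsto (fun k => (F (e k)).adjugate.mulVec (v (e k)) i) l (nhds 0) := by
      have := (hcont.tendsto 1).comp he
      simp only [hv1, Matrix.mulVec_zero] at this
      exact this
    refine h1.congr' ?_
    filter_upwards [hh, heq] with k hk hek
    obtain ⟨c, hc1, hcF, hcv⟩ := hc _ hk
    rw [hek, hcF, hcv, Matrix.adjugate_mul_distrib, Matrix.mulVec_mulVec, mul_assoc,
      Matrix.adjugate_mul, hc1, one_smul, mul_one]
  have hv0 : v (Q x) = 0 := by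
    have h1 : (F (Q x)).adjugate.mulVec (v (Q x)) = 0 := funext fun i => hadj i x
    have h2 := congrArg (F (Q x)).mulVec h1
    rw [Matrix.mulVec_mulVec, Matrix.mul_adjugate, Matrix.mulVec_zero, hdet, Matrix.smul_mulVec,
      Matrix.one_mulVec] at h2
    exact (smul_eq_zero.1 h2).resolve_left hF1
  obtain ⟨a, ha⟩ := hspan f₀ ⟨(MvPolynomial.mem_restrictTotalDegree _ _ _).2 le_rfl, hf₀⟩
  rw [ha, map_sum]
  refine Finset.sum_eq_zero fun i _ => ?_
  rw [MvPolynomial.smul_eval]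
  have := congrFun hv0 i
  simp only [v, Pi.zero_apply] at this
  rw [this, mul_zero]

theorem ofSeq_eq_iff (u v : ℕ → ℝ) :
    Hyperreal.ofSeq u = Hyperreal.ofSeq v ↔ ∀ᶠ k in hyperfilter ℕ, u k = v k :=
  Germ.coe_eq

theorem eval₂_ofSeq {σ : Type} (b : ℕ → σ → ℝ) (q : MvPolynomial σ ℝ) :
    MvPolynomial.eval₂ realHyperRingHom (fun i => Hyperreal.ofSeq fun k => b k i) q =
      Hyperreal.ofSeq fun k => MvPolynomial.eval (b k) q := by
  induction q using MvPolynomial.induction_on with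
  | C a => simp only [MvPolynomial.eval₂_C, MvPolynomial.eval_C]; rfl
  | add p q hp hq => rw [MvPolynomial.eval₂_add, hp, hq]; simp only [map_add]; rfl
  | mul_X p i hp =>
    rw [MvPolynomial.eval₂_mul, hp, MvPolynomial.eval₂_X]
    simp only [map_mul, MvPolynomial.eval_X]; rfl

theorem ofSeq_sum {κ : Type} (s : Finset κ) (u : κ → ℕ → ℝ) :
    ∑ i ∈ s, Hyperreal.ofSeq (u i) = Hyperreal.ofSeq fun k => ∑ i ∈ s, u i k := by
  classical
  induction s using Finset.induction_on with
  | empty => simp; rfl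
  | insert a s ha ih => rw [Finset.sum_insert ha, ih]; simp only [Finset.sum_insert ha]; rfl

theorem matOfSeq_mul {n : ℕ} (u v : ℕ → Mat n ℝ) :
    matOfSeq n u * matOfSeq n v = matOfSeq n fun k => u k * v k := by
  ext i j
  simp only [Matrix.mul_apply, matOfSeq, Matrix.of_apply]
  rw [← ofSeq_sum]
  rfl

theorem matOfSeq_eq {n : ℕ} (u v : ℕ → Mat n ℝ) :
    matOfSeq n u = matOfSeq n v ↔ ∀ᶠ k in hyperfilter ℕ, u k = v k := by
  constructor
  · intro h
    have : ∀ i j, ∀ᶠ k in hyperfilter ℕ, u k i j = v k i j := fun i j =>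
      (ofSeq_eq_iff _ _).1 (congrFun (congrFun h i) j)
    have h2 := eventually_all.2 fun i => eventually_all.2 (this i)
    filter_upwards [h2] with k hk
    ext i j
    exact hk i j
  · intro h
    ext i j
    apply (ofSeq_eq_iff _ _).2
    filter_upwards [h] with k hk
    rw [hk]

theorem UT_det {n : ℕ} {g : Mat n ℝ} (hg : g ∈ UTset n) : IsUnit g.det := by
  have htri : g.BlockTriangular id := fun i j hij => hg.2 i j hij
  rw [Matrix.det_of_isUpperTriangular htri]
  simp [hg.1]

/-- if a coset `gH₀` is near the value of a polynomial map into `G` at a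
sufficiently fast growing tuple of hyperreals `β`, then `q^♯(β) ∈ g·H₀^♯`. -/
theorem stmt19 {n d : ℕ} (G : Set (Mat n ℝ)) (hG : IsRealUnipotentGroup n G)
    (P : Fin n → Fin n → MvPolynomial (Fin d) ℝ)
    (hPG : ∀ x : Fin d → ℝ, (Matrix.of fun i j => MvPolynomial.eval x (P i j)) ∈ G)
    (hd : 0 < d) (β : Fin d → Hyperreal)
    (h1 : ∀ r : ℝ, (r : Hyperreal) < β ⟨0, hd⟩)
    (h2 : ∀ i : Fin d, 1 ≤ (i : ℕ) → ∀ q : MvPolynomial (Fin d) ℝ,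
      (∀ j ∈ q.vars, (j : ℕ) < (i : ℕ)) →
      MvPolynomial.eval₂ realHyperRingHom β q < β i)
    (H₀ : Set (Mat n ℝ)) (hH₀ : IsRealAlgSubgroup n G H₀)
    (g : Mat n ℝ) (hg : g ∈ G)
    (hnear : NearCoset n G g H₀
      (Matrix.of fun i j => MvPolynomial.eval₂ realHyperRingHom β (P i j))) :
    (Matrix.of fun i j => MvPolynomial.eval₂ realHyperRingHom β (P i j)) ∈
      {matCast g} * matSharp n H₀ := by
  choose bs hbs using fun i => Hyperreal.ofSeq_surjective (β i)
  let b : ℕ → Fin d → ℝ := fun k i => bs i k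
  have hβ : β = fun i => Hyperreal.ofSeq fun k => b k i := by
    ext i; rw [← hbs]
  have hev : ∀ q, MvPolynomial.eval₂ realHyperRingHom β q =
      Hyperreal.ofSeq fun k => MvPolynomial.eval (b k) q := by
    intro q; rw [hβ]; exact eval₂_ofSeq b q
  have hb : ∀ i, ∀ q : MvPolynomial (Fin d) ℝ, (∀ j ∈ q.vars, j < i) →
      ∀ᶠ k in (hyperfilter ℕ : Filter ℕ), MvPolynomial.eval (b k) q < b k i := by
    intro i q hq
    rw [← Hyperreal.ofSeq_lt_ofSeq, ← hev]
    have hbi : Hyperreal.ofSeq (fun k => b k i) = β i := hbs i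
    rw [hbi]
    by_cases hi : 1 ≤ (i : ℕ)
    · exact h2 i hi q hq
    · have hi0 : i = ⟨0, hd⟩ := Fin.ext (by simpa using hi)
      have hv : q.vars = ∅ := by
        apply Finset.eq_empty_of_forall_notMem
        intro j hj
        have h3 : (j : ℕ) < (i : ℕ) := hq j hj
        omega
      rw [MvPolynomial.vars_eq_empty_iff_eq_C] at hv
      rw [hv, MvPolynomial.eval₂_C, hi0]
      exact h1 _
  let Pm : (Fin d → ℝ) → Mat n ℝ := fun x => Matrix.of fun i j => MvPolynomial.eval x (P i j)
  have hα : (Matrix.of fun i j => MvPolynomial.eval₂ realHyperRingHom β (P i j)) =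
      matOfSeq n fun k => Pm (b k) := by
    ext i j
    exact hev _
  have hcast : matCast g = matOfSeq n fun _ => g := rfl
  rw [NearCoset, hα] at hnear
  rw [hα]
  obtain ⟨E, ⟨⟨e, heG, rfl⟩, hinf⟩, _, ⟨_, rfl, _, ⟨h, hh, rfl⟩, rfl⟩, heq⟩ := hnear
  simp only [hcast, matOfSeq_mul] at heq
  rw [matOfSeq_eq] at heq
  obtain ⟨⟨SG, hSG⟩, hG1, hGm, hGi⟩ := hG
  obtain ⟨hHG, ⟨SH, hSH⟩, hH1, hHm, hHi⟩ := hH₀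
  have hGUT : G ⊆ UTset n := by rw [hSG]; exact fun A hA => hA.1
  have hgu := UT_det (hGUT hg)
  have he : Tendsto e (hyperfilter ℕ : Filter ℕ) (nhds 1) := by
    apply tendsto_pi_nhds.2
    intro i
    apply tendsto_pi_nhds.2
    intro j
    have h3 := hinf i j
    have h4 : matOfSeq n e i j - (1 : Mat n Hyperreal) i j =
        Hyperreal.ofSeq fun k => e k i j - (1 : Mat n ℝ) i j := by
      have : (1 : Mat n Hyperreal) i j = Hyperreal.ofSeq fun _ => (1 : Mat n ℝ) i j := by
        by_cases hij : i = j
        · subst hij; simp only [Matrix.one_apply_eq]; rfl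
        · simp only [Matrix.one_apply_ne hij]; rfl
      rw [this]; rfl
    rw [h4] at h3
    have h5 := Hyperreal.isSt_ofSeq_iff_tendsto.1 h3
    have h6 := h5.add_const ((1 : Mat n ℝ) i j)
    simpa using h6
  have key : ∀ x, g⁻¹ * Pm x ∈ H₀ := by
    intro x
    rw [hSH]
    refine ⟨hGUT (hGm _ (hGi _ hg) _ (hPG x)), fun p hp => ?_⟩
    refine main_real (hyperfilter ℕ : Filter ℕ) b hb H₀ (hHG.trans hGUT) hH1 hHm
      (fun x => g⁻¹ * Pm x) ?_ (fun k => g⁻¹ * e k * g) h ?_ hh ?_ p ?_ x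
    · intro i j
      have : (fun x => (g⁻¹ * Pm x) i j) = ∑ r, (g⁻¹ i r) • (fun x => Pm x r j) := by
        ext x
        simp [Matrix.mul_apply]
      rw [this]
      exact (polyFun d).sum_mem fun r _ => (polyFun d).smul_mem
        ((mem_polyFun _).2 ⟨P r j, fun x => rfl⟩) _
    · have hcont : Continuous fun x : Mat n ℝ => g⁻¹ * x * g := by fun_prop
      have h3 := (hcont.tendsto 1).comp he
      rw [mul_one, Matrix.nonsing_inv_mul _ hgu] at h3
      exact h3
    · filter_upwards [heq] with k hk
      rw [← hk]
      simp only [mul_assoc]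
    · intro y hy
      rw [hSH] at hy
      exact hy.2 p hp
  refine ⟨matCast g, rfl, matOfSeq n fun k => g⁻¹ * Pm (b k),
    ⟨_, Eventually.of_forall fun k => key (b k), rfl⟩, ?_⟩
  simp only [hcast, matOfSeq_mul]
  congr 1
  ext1 k
  rw [← mul_assoc, Matrix.mul_nonsing_inv _ hgu, one_mul]
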